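/- Let 𝒰 ⊆ B(K₁,L₁) and 𝒱 ⊆ B(H₂,K₂) be ternary rings of operators, let R_𝒰 ⊆ B(K₁) be the norm-closed linear span of {u₁*u₂ : u₁,u₂ ∈ 𝒰} and R_𝒱 ⊆ B(H₂) the norm-closed linear span of {v₁*v₂ : v₁,v₂ ∈ 𝒱} (these are C*-subalgebras). Suppose π : R_𝒰 → B(H) and ρ : R_𝒱 → B(H) are *-homomorphisms with commuting ranges. Then there exist complex Hilbert spaces K and L and semi-commuting ternary morphisms φ : 𝒰 → B(K,L) and ψ : 𝒱 → B(H,K) such that π(u₁*u₂) ρ(v₁*v₂) = ψ(v₁)* φ(u₁)* φ(u₂) ψ(v₂) for all u₁,u₂ ∈ 𝒰 and v₁,v₂ ∈ 𝒱. -/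

import Mathlib

open ContinuousLinearMap

universe u

/-- A bundled complex Hilbert space. -/
structure HilbertC : Type (u + 1) where
  carrier : Type u
  [nacg : NormedAddCommGroup carrier]
  [ips : InnerProductSpace ℂ carrier]
  [cs : CompleteSpace carrier]

attribute [instance] HilbertC.nacg HilbertC.ips HilbertC.cs

/-- A linear map `φ` on a TRO `𝒰 ⊆ B(K₀, L₀)` is a ternary morphism if it
satisfies `φ(S T* R) = φ(S) φ(T)* φ(R)` for all `S, T, R ∈ 𝒰`. -/
def IsTernaryHom
    {K₀ L₀ K L : Type*}
    [NormedAddCommGroup K₀] [InnerProductSpace ℂ K₀] [CompleteSpace K₀]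
    [NormedAddCommGroup L₀] [InnerProductSpace ℂ L₀] [CompleteSpace L₀]
    [NormedAddCommGroup K] [InnerProductSpace ℂ K] [CompleteSpace K]
    [NormedAddCommGroup L] [InnerProductSpace ℂ L] [CompleteSpace L]
    (𝒰 : Submodule ℂ (K₀ →L[ℂ] L₀)) (φ : ↥𝒰 →ₗ[ℂ] (K →L[ℂ] L)) : Prop :=
  ∀ (s t r : 𝒰)
    (h : (s : K₀ →L[ℂ] L₀) ∘L (adjoint (t : K₀ →L[ℂ] L₀)) ∘L (r : K₀ →L[ℂ] L₀) ∈ 𝒰),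
    φ ⟨(s : K₀ →L[ℂ] L₀) ∘L (adjoint (t : K₀ →L[ℂ] L₀)) ∘L (r : K₀ →L[ℂ] L₀), h⟩
      = φ s ∘L (adjoint (φ t)) ∘L φ r

/-- A function `π : B(K₀) → B(H)` is a *-homomorphism on a subset `R`. -/
def IsStarHomOn
    {K₀ H : Type*}
    [NormedAddCommGroup K₀] [InnerProductSpace ℂ K₀] [CompleteSpace K₀]
    [NormedAddCommGroup H] [InnerProductSpace ℂ H] [CompleteSpace H]
    (R : Set (K₀ →L[ℂ] K₀)) (π : (K₀ →L[ℂ] K₀) → (H →L[ℂ] H)) : Prop :=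
  (∀ b₁ ∈ R, ∀ b₂ ∈ R, π (b₁ + b₂) = π b₁ + π b₂) ∧
  (∀ (c : ℂ), ∀ b ∈ R, π (c • b) = c • π b) ∧
  (∀ b₁ ∈ R, ∀ b₂ ∈ R, π (b₁ * b₂) = π b₁ * π b₂) ∧
  (∀ b ∈ R, π (star b) = star (π b))

section helpers

variable {H₂ K₂ : Type u}
    [NormedAddCommGroup H₂] [InnerProductSpace ℂ H₂] [CompleteSpace H₂]
    [NormedAddCommGroup K₂] [InnerProductSpace ℂ K₂] [CompleteSpace K₂]

/-- operators `b` with `b 𝒱 ⊆ 𝒱` and `b* 𝒱 ⊆ 𝒱` -/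
def leftStab (𝒱 : Submodule ℂ (H₂ →L[ℂ] K₂)) : StarSubalgebra ℝ (K₂ →L[ℂ] K₂) where
  carrier := {b | ∀ v ∈ 𝒱, b ∘L v ∈ 𝒱 ∧ (star b) ∘L v ∈ 𝒱}
  mul_mem' := by
    intro a b ha hb v hv
    refine ⟨(ha _ (hb v hv).1).1, ?_⟩
    rw [star_mul]
    exact (hb _ (ha v hv).2).2
  add_mem' := by
    intro a b ha hb v hv
    rw [star_add, add_comp, add_comp]
    exact ⟨𝒱.add_mem (ha v hv).1 (hb v hv).1, 𝒱.add_mem (ha v hv).2 (hb v hv).2⟩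
  algebraMap_mem' := by
    intro r v hv
    have h : (algebraMap ℝ (K₂ →L[ℂ] K₂) r) ∘L v = (r : ℂ) • v := by
      ext x
      simp [Algebra.algebraMap_eq_smul_one]
    rw [← algebraMap_star_comm, star_trivial, h]
    exact ⟨𝒱.smul_mem _ hv, 𝒱.smul_mem _ hv⟩
  star_mem' := by
    intro a ha v hv
    rw [star_star]
    exact ⟨(ha v hv).2, (ha v hv).1⟩

theorem isClosed_leftStab (𝒱 : Submodule ℂ (H₂ →L[ℂ] K₂))
    (hc : IsClosed (𝒱 : Set (H₂ →L[ℂ] K₂))) :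
    IsClosed (leftStab 𝒱 : Set (K₂ →L[ℂ] K₂)) := by
  have : (leftStab 𝒱 : Set (K₂ →L[ℂ] K₂)) =
      ⋂ v ∈ 𝒱, ((fun b : K₂ →L[ℂ] K₂ => b ∘L v) ⁻¹' (𝒱 : Set _) ∩
        (fun b : K₂ →L[ℂ] K₂ => (star b) ∘L v) ⁻¹' (𝒱 : Set _)) := by
    ext b
    simp [leftStab]
  rw [this]
  refine isClosed_biInter fun v hv => ?_
  refine (hc.preimage (by fun_prop)).inter (hc.preimage ?_)
  have : Continuous (fun b : K₂ →L[ℂ] K₂ => star b) := continuous_star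
  fun_prop

theorem exists_resolvent (𝒱 : Submodule ℂ (H₂ →L[ℂ] K₂))
    (hc : IsClosed (𝒱 : Set (H₂ →L[ℂ] K₂)))
    (htro : ∀ S ∈ 𝒱, ∀ T ∈ 𝒱, ∀ R ∈ 𝒱, S ∘L (adjoint T) ∘L R ∈ 𝒱)
    {ι : Type*} [Fintype ι] (v : ι → 𝒱) (t : ℝ) (ht : 0 < t) :
    ∃ w : ι → 𝒱, ∀ j, (v j : H₂ →L[ℂ] K₂) =
      (∑ k, (v k : H₂ →L[ℂ] K₂) ∘L adjoint (v k : H₂ →L[ℂ] K₂) ∘L (w j : H₂ →L[ℂ] K₂))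
        + (t : ℂ) • (w j : H₂ →L[ℂ] K₂) := by
  classical
  set a : K₂ →L[ℂ] K₂ := ∑ k, (v k : H₂ →L[ℂ] K₂) ∘L adjoint (v k : H₂ →L[ℂ] K₂) with ha
  have ha0 : 0 ≤ a := by
    refine Finset.sum_nonneg fun k _ => ?_
    rw [nonneg_iff_isPositive]
    exact isPositive_self_comp_adjoint _
  have hsa : IsSelfAdjoint a := IsSelfAdjoint.of_nonneg ha0
  have hmem : a ∈ leftStab 𝒱 := by
    have h1 : ∀ x ∈ 𝒱, a ∘L x ∈ 𝒱 := by
      intro x hx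
      rw [ha, finsetSum_comp]
      exact 𝒱.sum_mem fun k _ => htro _ (v k).2 _ (v k).2 _ hx
    intro x hx
    rw [hsa.star_eq]
    exact ⟨h1 x hx, h1 x hx⟩
  have hspec : ∀ x ∈ spectrum ℝ a, 0 ≤ x := spectrum_nonneg_of_nonneg ha0
  let c := cfc (fun x : ℝ => (x + t)⁻¹) a
  have hcm : c ∈ leftStab 𝒱 :=
    StarAlgebra.elemental.le_of_mem (isClosed_leftStab 𝒱 hc) hmem (cfc_mem_elemental _ a)
  have hne : ∀ x ∈ spectrum ℝ a, x + t ≠ 0 := fun x hx => by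
    have := hspec x hx
    positivity
  have hcont : ContinuousOn (fun x : ℝ => (x + t)⁻¹) (spectrum ℝ a) :=
    ContinuousOn.inv₀ (by fun_prop) hne
  have hmul : (a + algebraMap ℝ _ t) * c = 1 := by
    have h1 : cfc (fun x : ℝ => x + t) a = a + algebraMap ℝ _ t := by
      rw [cfc_add_const t (fun x : ℝ => x) a, cfc_id' ℝ a]
    rw [← h1, ← cfc_mul (fun x : ℝ => x + t) _ a (by fun_prop) hcont, ← cfc_one ℝ a]
    refine cfc_congr fun x hx => ?_
    exact mul_inv_cancel₀ (hne x hx)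
  refine ⟨fun j => ⟨c ∘L (v j : H₂ →L[ℂ] K₂), (hcm _ (v j).2).1⟩, fun j => ?_⟩
  have h2 : ((a + algebraMap ℝ _ t) * c) ∘L (v j : H₂ →L[ℂ] K₂) = v j := by
    rw [hmul]; rfl
  conv_lhs => rw [← h2]
  ext x
  simp [ha, add_mul, Algebra.algebraMap_eq_smul_one, sum_apply]

variable {H : Type u} [NormedAddCommGroup H] [InnerProductSpace ℂ H] [CompleteSpace H]

/-- abstract hypotheses on a kernel on a TRO -/
structure TernKer (𝒱 : Submodule ℂ (H₂ →L[ℂ] K₂)) (k : 𝒱 → 𝒱 → (H →L[ℂ] H)) : Prop where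
  add : ∀ v x y, k v (x + y) = k v x + k v y
  smul : ∀ (c : ℂ) v x, k v (c • x) = c • k v x
  str : ∀ v x, star (k v x) = k x v
  mul : ∀ (v w x y : 𝒱)
    (h : (w : H₂ →L[ℂ] K₂) ∘L adjoint (x : H₂ →L[ℂ] K₂) ∘L (y : H₂ →L[ℂ] K₂) ∈ 𝒱),
    k v ⟨_, h⟩ = k v w * k x y

theorem nonneg_of_resolvent {B : Type*} [CStarAlgebra B] [PartialOrder B] [StarOrderedRing B]
    (M : B) (hsa : IsSelfAdjoint M)
    (h : ∀ t : ℝ, 0 < t → ∃ N : B, M = M * N + (t : ℂ) • N) : 0 ≤ M := by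
  rw [StarOrderedRing.nonneg_iff_spectrum_nonneg (R := ℝ) M hsa]
  intro x hx
  by_contra hlt
  push Not at hlt
  obtain ⟨N, hN⟩ := h (-x) (by linarith)
  have key : M = M * N - x • N := by
    rw [sub_eq_add_neg, ← neg_smul]
    exact hN
  have e1 : (algebraMap ℝ _ x - M) * (1 - N) = algebraMap ℝ _ x := by
    rw [sub_mul, mul_sub, mul_sub, mul_one, mul_one, Algebra.algebraMap_eq_smul_one]
    rw [smul_mul_assoc, one_mul]
    have k2 : x • N = M * N - M := by
      rw [eq_sub_iff_add_eq, add_comm, ← eq_sub_iff_add_eq]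
      exact key
    rw [k2]
    abel
  have e2 : (1 - star N) * (algebraMap ℝ _ x - M) = algebraMap ℝ _ x := by
    have := congrArg star e1
    simpa [star_mul, hsa.star_eq, ← algebraMap_star_comm] using this
  refine hx ?_
  change IsUnit (algebraMap ℝ B x - M)
  rw [isUnit_iff_exists_and_exists]
  constructor
  · refine ⟨(1 - N) * algebraMap ℝ _ x⁻¹, ?_⟩
    rw [← mul_assoc, e1, ← map_mul, mul_inv_cancel₀ hlt.ne, map_one]
  · refine ⟨algebraMap ℝ _ x⁻¹ * (1 - star N), ?_⟩
    rw [mul_assoc, e2, ← map_mul, inv_mul_cancel₀ hlt.ne, map_one]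

theorem exists_star_mul_self_of_nonneg {B : Type*} [CStarAlgebra B] [PartialOrder B]
    [StarOrderedRing B] {M : B} (h : 0 ≤ M) : ∃ S : B, M = star S * S :=
  CStarAlgebra.nonneg_iff_eq_star_mul_self.mp h

theorem TernKer.nonneg {𝒱 : Submodule ℂ (H₂ →L[ℂ] K₂)}
    (hc : IsClosed (𝒱 : Set (H₂ →L[ℂ] K₂)))
    (htro : ∀ S ∈ 𝒱, ∀ T ∈ 𝒱, ∀ R ∈ 𝒱, S ∘L (adjoint T) ∘L R ∈ 𝒱)
    {k : 𝒱 → 𝒱 → (H →L[ℂ] H)} (hk : TernKer 𝒱 k)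
    {ι : Type*} [Fintype ι] [DecidableEq ι] (v : ι → 𝒱) :
    (0 : CStarMatrix ι ι (H →L[ℂ] H)) ≤
      CStarMatrix.ofMatrix (fun i j => k (v i) (v j)) := by
  set M : CStarMatrix ι ι (H →L[ℂ] H) := CStarMatrix.ofMatrix (fun i j => k (v i) (v j)) with hM
  have hMij : ∀ i j, M i j = k (v i) (v j) := fun i j => rfl
  have hsa : IsSelfAdjoint M := by
    refine CStarMatrix.ext fun i j => ?_
    rw [CStarMatrix.star_apply, hMij, hMij, hk.str]
  refine nonneg_of_resolvent M hsa fun t ht => ?_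
  obtain ⟨w, hw⟩ := exists_resolvent 𝒱 hc htro v t ht
  let N : CStarMatrix ι ι (H →L[ℂ] H) := CStarMatrix.ofMatrix (fun i j => k (v i) (w j))
  have hNij : ∀ i j, N i j = k (v i) (w j) := fun i j => rfl
  have hksum : ∀ (u : 𝒱) (f : ι → 𝒱), k u (∑ i, f i) = ∑ i, k u (f i) := by
    intro u f
    let l : 𝒱 →ₗ[ℂ] (H →L[ℂ] H) :=
      { toFun := k u, map_add' := hk.add u, map_smul' := fun c y => hk.smul c u y }
    exact map_sum l f _
  refine ⟨N, ?_⟩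
  refine CStarMatrix.ext fun i j => ?_
  rw [CStarMatrix.add_apply, CStarMatrix.mul_apply, CStarMatrix.smul_apply]
  simp only [hMij, hNij]
  have h1 : v j = (∑ m, (⟨_, htro _ (v m).2 _ (v m).2 _ (w j).2⟩ : 𝒱)) + (t : ℂ) • w j := by
    apply Subtype.ext
    rw [hw j]
    simp
  conv_lhs => rw [h1, hk.add, hk.smul, hksum]
  simp only [hk.mul]

theorem TernKer.posSemidef {𝒱 : Submodule ℂ (H₂ →L[ℂ] K₂)}
    (hc : IsClosed (𝒱 : Set (H₂ →L[ℂ] K₂)))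
    (htro : ∀ S ∈ 𝒱, ∀ T ∈ 𝒱, ∀ R ∈ 𝒱, S ∘L (adjoint T) ∘L R ∈ 𝒱)
    {k : 𝒱 → 𝒱 → (H →L[ℂ] H)} (hk : TernKer 𝒱 k) :
    (Matrix.of k).PosSemidef := by
  classical
  have htf := (RKHS.posSemidef_tfae (K := Matrix.of k)).out 0 2
  refine htf.mpr ⟨?_, ?_⟩
  · ext1 i j
    simp [Matrix.conjTranspose_apply, hk.str]
  intro f
  have hpos := hk.nonneg hc htro (fun i : f.support => (i : 𝒱))
  obtain ⟨S, hS⟩ := exists_star_mul_self_of_nonneg hpos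
  have hij : ∀ i j : f.support, k i j = ∑ z, star (S z i) * S z j := by
    intro i j
    have := congrFun (congrFun hS i) j
    rw [CStarMatrix.mul_apply] at this
    exact this
  have hval : (f.sum fun x w ↦ f.sum fun x' w' ↦ inner ℂ (Matrix.of k x' x w) w') =
      ∑ z : f.support, inner ℂ (∑ i : f.support, S z i (f i)) (∑ i : f.support, S z i (f i)) := by
    have h0 : (f.sum fun x w ↦ f.sum fun x' w' ↦ inner ℂ (Matrix.of k x' x w) w') =
        ∑ i : f.support, ∑ j : f.support, inner ℂ (k j i (f i)) (f j) := by
      simp only [Finsupp.sum]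
      rw [← Finset.sum_coe_sort f.support]
      refine Finset.sum_congr rfl fun i _ => ?_
      rw [← Finset.sum_coe_sort f.support]
      rfl
    rw [h0]
    have h1 : ∀ i j : f.support, inner ℂ (k j i (f i)) (f j) =
        ∑ z, inner ℂ (S z i (f i)) (S z j (f j)) := by
      intro i j
      rw [hij, sum_apply, sum_inner]
      refine Finset.sum_congr rfl fun z _ => ?_
      rw [← adjoint_inner_left]
      rfl
    simp only [h1, sum_inner, inner_sum]
    rw [Finset.sum_comm_cycle]
    refine Finset.sum_congr rfl fun z _ => ?_
    first
    | rfl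
    | rw [Finset.sum_comm]
  rw [hval, map_sum]
  exact Finset.sum_nonneg fun z _ => inner_self_nonneg

theorem TernKer.dilate_aux {𝒱 : Submodule ℂ (H₂ →L[ℂ] K₂)}
    {k : 𝒱 → 𝒱 → (H →L[ℂ] H)} (hk : TernKer 𝒱 k)
    {E : Type u} [NormedAddCommGroup E] [InnerProductSpace ℂ E] [CompleteSpace E]
    [RKHS ℂ E 𝒱 H] (hE : RKHS.kernel E = Matrix.of k) :
    ∃ (ψ : ↥𝒱 →ₗ[ℂ] (H →L[ℂ] E)),
      IsTernaryHom 𝒱 ψ ∧ (∀ v w, adjoint (ψ v) ∘L ψ w = k v w) ∧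
      (Submodule.span ℂ {y | ∃ v h, ψ v h = y}).topologicalClosure = ⊤ := by
  have hker : ∀ x y : 𝒱, adjoint (RKHS.kerFun E x) ∘L RKHS.kerFun E y = k x y := by
    intro x y
    rw [← RKHS.kernel_apply, hE]; rfl
  have happ : ∀ (x y : 𝒱) (h : H), RKHS.kerFun E y h x = k x y h := by
    intro x y h
    rw [RKHS.kerFun_apply, hE]; rfl
  let ψ : 𝒱 →ₗ[ℂ] (H →L[ℂ] E) :=
    { toFun := fun v => RKHS.kerFun E v
      map_add' := by
        intro a b
        refine ContinuousLinearMap.ext fun h => RKHS.ext fun x => ?_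
        simp [happ, hk.add]
      map_smul' := by
        intro c b
        refine ContinuousLinearMap.ext fun h => RKHS.ext fun x => ?_
        simp [happ, hk.smul] }
  refine ⟨ψ, ?_, hker, RKHS.kerFun_dense E⟩
  intro s t r h
  refine ContinuousLinearMap.ext fun z => RKHS.ext (H := E) fun x => ?_
  have h1 : adjoint (RKHS.kerFun E t) (RKHS.kerFun E r z) = k t r z := by
    rw [← hker]; rfl
  change RKHS.kerFun E _ z x = RKHS.kerFun E s (adjoint (RKHS.kerFun E t) (RKHS.kerFun E r z)) x
  rw [h1, happ, happ, hk.mul]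
  rfl

theorem TernKer.dilate {𝒱 : Submodule ℂ (H₂ →L[ℂ] K₂)}
    (hc : IsClosed (𝒱 : Set (H₂ →L[ℂ] K₂)))
    (htro : ∀ S ∈ 𝒱, ∀ T ∈ 𝒱, ∀ R ∈ 𝒱, S ∘L (adjoint T) ∘L R ∈ 𝒱)
    {k : 𝒱 → 𝒱 → (H →L[ℂ] H)} (hk : TernKer 𝒱 k) :
    ∃ (𝕂 : HilbertC.{u}) (ψ : ↥𝒱 →ₗ[ℂ] (H →L[ℂ] 𝕂.carrier)),
      IsTernaryHom 𝒱 ψ ∧ (∀ v w, adjoint (ψ v) ∘L ψ w = k v w) ∧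
      (Submodule.span ℂ {y | ∃ v h, ψ v h = y}).topologicalClosure = ⊤ := by
  have : Fact (Matrix.of k).PosSemidef := ⟨hk.posSemidef hc htro⟩
  exact ⟨⟨RKHS.OfKernel (Matrix.of k)⟩, hk.dilate_aux RKHS.OfKernel.kernel_ofKernel⟩

theorem exists_lift {X : Type u} {K : Type u}
    [NormedAddCommGroup K] [InnerProductSpace ℂ K] [CompleteSpace K]
    (ψ : X → (H →L[ℂ] K))
    (hd : (Submodule.span ℂ {y | ∃ v h, ψ v h = y}).topologicalClosure = ⊤)
    (T : H →L[ℂ] H) (hT : ∀ v w, Commute T (adjoint (ψ v) ∘L ψ w)) :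
    ∃ T' : K →L[ℂ] K, ∀ v, T' ∘L ψ v = ψ v ∘L T := by
  classical
  let P : (H →L[ℂ] H) → ((X →₀ H) →ₗ[ℂ] K) := fun A =>
    Finsupp.lsum ℂ (fun v => ((ψ v ∘L A : H →L[ℂ] K) : H →ₗ[ℂ] K))
  have hPapp : ∀ A f, P A f = f.sum fun v h => ψ v (A h) := by
    intro A f; simp only [P, Finsupp.lsum_apply]; rfl
  have hPs : ∀ A v h, P A (Finsupp.single v h) = ψ v (A h) := by
    intro A v h; simp [P]
  have hin : ∀ (A B : H →L[ℂ] H), (∀ v w, Commute A (adjoint (ψ v) ∘L ψ w)) → ∀ f g,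
      inner ℂ (P A f) (P B g) = inner ℂ (P 1 f) (P (star A * B) g) := by
    intro A B hA f g
    simp only [hPapp, Finsupp.sum_inner, Finsupp.inner_sum]
    simp only [Finsupp.sum]
    refine Finset.sum_congr rfl fun w _ => Finset.sum_congr rfl fun v _ => ?_
    have h1 : Commute (star A) (adjoint (ψ v) ∘L ψ w) := by
      have := (hA w v).star_star
      simpa [star_eq_adjoint, adjoint_comp] using this
    have h2 := congrArg (fun Z : H →L[ℂ] H => Z (B (g w))) h1.eq
    rw [← adjoint_inner_right, ← adjoint_inner_right (ψ v), ← adjoint_inner_right A]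
    exact congrArg (inner ℂ (f v)) h2
  obtain ⟨S, hS, hSc⟩ : ∃ S : H →L[ℂ] H, star T * T + star S * S = algebraMap ℝ _ (‖T‖ ^ 2) ∧
      ∀ v w, Commute S (adjoint (ψ v) ∘L ψ w) := by
    have h0 : 0 ≤ algebraMap ℝ (H →L[ℂ] H) (‖T‖ ^ 2) - star T * T :=
      sub_nonneg.mpr CStarAlgebra.star_mul_le_algebraMap_norm_sq
    refine ⟨CFC.sqrt (algebraMap ℝ (H →L[ℂ] H) (‖T‖ ^ 2) - star T * T), ?_, ?_⟩
    · rw [(IsSelfAdjoint.of_nonneg (CFC.sqrt_nonneg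
        (algebraMap ℝ (H →L[ℂ] H) (‖T‖ ^ 2) - star T * T))).star_eq, CFC.sqrt_mul_sqrt_self _ h0]
      abel
    · intro v w
      have h1 : Commute (star T) (adjoint (ψ v) ∘L ψ w) := by
        have := (hT w v).star_star
        simpa [star_eq_adjoint, adjoint_comp] using this
      have h2 : Commute (algebraMap ℝ (H →L[ℂ] H) (‖T‖ ^ 2) - star T * T)
          (adjoint (ψ v) ∘L ψ w) :=
        Commute.sub_left (Algebra.commutes _ _) (h1.mul_left (hT v w))
      rw [CFC.sqrt_eq_cfc]
      exact h2.cfc_nnreal _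
  have hbound : ∀ f, ‖P T f‖ ≤ ‖T‖ * ‖P 1 f‖ := by
    intro f
    have e1 := hin T T hT f f
    have e2 := hin S S hSc f f
    have e3 : inner ℂ (P T f) (P T f) + inner ℂ (P S f) (P S f) =
        ((‖T‖ ^ 2 : ℝ) : ℂ) * inner ℂ (P 1 f) (P 1 f) := by
      rw [e1, e2, ← inner_add_right]
      have : P (star T * T) f + P (star S * S) f = ((‖T‖ ^ 2 : ℝ) : ℂ) • P 1 f := by
        simp only [hPapp]
        rw [← Finsupp.sum_add, Finsupp.smul_sum]
        refine Finsupp.sum_congr fun v _ => ?_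
        rw [← map_add, ← add_apply, hS, ← map_smul]
        rw [Algebra.algebraMap_eq_smul_one]
        rfl
      rw [this, inner_smul_right]
    simp only [inner_self_eq_norm_sq_to_K] at e3
    have e4 : ‖P T f‖ ^ 2 + ‖P S f‖ ^ 2 = ‖T‖ ^ 2 * ‖P 1 f‖ ^ 2 := by
      apply Complex.ofReal_injective
      push_cast
      push_cast at e3
      exact e3
    refine le_of_sq_le_sq ?_ (by positivity)
    rw [mul_pow]
    nlinarith [sq_nonneg ‖P S f‖]
  have hdense : DenseRange (P 1) := by
    have h1 : Submodule.span ℂ {y | ∃ v h, ψ v h = y} ≤ LinearMap.range (P 1) := by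
      rw [Submodule.span_le]
      rintro _ ⟨v, h, rfl⟩
      exact ⟨Finsupp.single v h, by simp [hPs]⟩
    have h2 : Dense ((Submodule.span ℂ {y | ∃ v h, ψ v h = y} : Submodule ℂ K) : Set K) :=
      Submodule.dense_iff_topologicalClosure_eq_top.mpr hd
    exact h2.mono h1
  refine ⟨(P T).extendOfNorm (P 1), fun v => ?_⟩
  ext h
  have := LinearMap.extendOfNorm_eq (f := P T) (e := P 1) hdense ⟨_, hbound⟩ (Finsupp.single v h)
  simpa [hPs] using this

theorem ternKer_of_starHom (𝒰 : Submodule ℂ (H₂ →L[ℂ] K₂)) (R : Set (H₂ →L[ℂ] H₂))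
    (hR : R = closure
      ((Submodule.span ℂ {b : H₂ →L[ℂ] H₂ | ∃ u₁ ∈ 𝒰, ∃ u₂ ∈ 𝒰, b = (adjoint u₁) ∘L u₂}) :
        Set (H₂ →L[ℂ] H₂)))
    (π : (H₂ →L[ℂ] H₂) → (H →L[ℂ] H)) (hπ : IsStarHomOn R π) :
    (∀ x y : 𝒰, adjoint (x : H₂ →L[ℂ] K₂) ∘L (y : H₂ →L[ℂ] K₂) ∈ R) ∧
    TernKer 𝒰 (fun x y => π (adjoint (x : H₂ →L[ℂ] K₂) ∘L (y : H₂ →L[ℂ] K₂))) := by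
  obtain ⟨h1, h2, h3, h4⟩ := hπ
  have hmem : ∀ x y : 𝒰, adjoint (x : H₂ →L[ℂ] K₂) ∘L (y : H₂ →L[ℂ] K₂) ∈ R := by
    intro x y
    rw [hR]
    exact subset_closure (Submodule.subset_span ⟨x, x.2, y, y.2, rfl⟩)
  refine ⟨hmem, ?_, ?_, ?_, ?_⟩
  · intro v x y
    rw [← h1 _ (hmem v x) _ (hmem v y)]
    congr 1
    exact comp_add _ _ _
  · intro c v x
    rw [← h2 c _ (hmem v x)]
    congr 1
    exact comp_smul _ _ _
  · intro v x
    rw [← h4 _ (hmem v x)]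
    congr 1
    simp [star_eq_adjoint, adjoint_comp]
  · intro v w x y h
    rw [← h3 _ (hmem v w) _ (hmem x y)]
    rfl

end helpers


/-- Commuting representations of the right C*-algebras of two TROs
arise from semi-commuting ternary morphisms. -/
theorem statement4
    {K₁ L₁ H₂ K₂ H : Type u}
    [NormedAddCommGroup K₁] [InnerProductSpace ℂ K₁] [CompleteSpace K₁]
    [NormedAddCommGroup L₁] [InnerProductSpace ℂ L₁] [CompleteSpace L₁]
    [NormedAddCommGroup H₂] [InnerProductSpace ℂ H₂] [CompleteSpace H₂]
    [NormedAddCommGroup K₂] [InnerProductSpace ℂ K₂] [CompleteSpace K₂]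
    [NormedAddCommGroup H] [InnerProductSpace ℂ H] [CompleteSpace H]
    (𝒰 : Submodule ℂ (K₁ →L[ℂ] L₁)) (𝒱 : Submodule ℂ (H₂ →L[ℂ] K₂))
    (h𝒰closed : IsClosed (𝒰 : Set (K₁ →L[ℂ] L₁)))
    (h𝒱closed : IsClosed (𝒱 : Set (H₂ →L[ℂ] K₂)))
    (h𝒰tro : ∀ S ∈ 𝒰, ∀ T ∈ 𝒰, ∀ R ∈ 𝒰, S ∘L (adjoint T) ∘L R ∈ 𝒰)
    (h𝒱tro : ∀ S ∈ 𝒱, ∀ T ∈ 𝒱, ∀ R ∈ 𝒱, S ∘L (adjoint T) ∘L R ∈ 𝒱)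
    (R𝒰 : Set (K₁ →L[ℂ] K₁)) (R𝒱 : Set (H₂ →L[ℂ] H₂))
    (hR𝒰 : R𝒰 = closure
      ((Submodule.span ℂ {b : K₁ →L[ℂ] K₁ | ∃ u₁ ∈ 𝒰, ∃ u₂ ∈ 𝒰, b = (adjoint u₁) ∘L u₂}) :
        Set (K₁ →L[ℂ] K₁)))
    (hR𝒱 : R𝒱 = closure
      ((Submodule.span ℂ {b : H₂ →L[ℂ] H₂ | ∃ v₁ ∈ 𝒱, ∃ v₂ ∈ 𝒱, b = (adjoint v₁) ∘L v₂}) :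
        Set (H₂ →L[ℂ] H₂)))
    (π : (K₁ →L[ℂ] K₁) → (H →L[ℂ] H)) (ρ : (H₂ →L[ℂ] H₂) → (H →L[ℂ] H))
    (hπ : IsStarHomOn R𝒰 π) (hρ : IsStarHomOn R𝒱 ρ)
    (hranges : ∀ b ∈ R𝒰, ∀ c ∈ R𝒱, Commute (π b) (ρ c)) :
    ∃ (𝕂 𝕃 : HilbertC.{u})
      (φ : ↥𝒰 →ₗ[ℂ] (𝕂.carrier →L[ℂ] 𝕃.carrier))
      (ψ : ↥𝒱 →ₗ[ℂ] (H →L[ℂ] 𝕂.carrier)),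
      IsTernaryHom 𝒰 φ ∧ IsTernaryHom 𝒱 ψ ∧
      (∀ (u₁ u₂ : 𝒰) (v₁ v₂ : 𝒱),
        Commute ((adjoint (φ u₁)) ∘L (φ u₂)) ((ψ v₁) ∘L (adjoint (ψ v₂)))) ∧
      (∀ (u₁ u₂ : 𝒰) (v₁ v₂ : 𝒱),
        (π ((adjoint (u₁ : K₁ →L[ℂ] L₁)) ∘L (u₂ : K₁ →L[ℂ] L₁))) ∘L
            (ρ ((adjoint (v₁ : H₂ →L[ℂ] K₂)) ∘L (v₂ : H₂ →L[ℂ] K₂)))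
          = (adjoint (ψ v₁)) ∘L (adjoint (φ u₁)) ∘L (φ u₂) ∘L (ψ v₂)) := by
  obtain ⟨hmU, hkU⟩ := ternKer_of_starHom 𝒰 R𝒰 hR𝒰 π hπ
  obtain ⟨hmV, hkV⟩ := ternKer_of_starHom 𝒱 R𝒱 hR𝒱 ρ hρ
  obtain ⟨𝕂, ψ, hψ, hψk, hd⟩ := hkV.dilate h𝒱closed h𝒱tro
  have hdense : Dense ((Submodule.span ℂ {y | ∃ v h, ψ v h = y} : Submodule ℂ 𝕂.carrier) :
      Set 𝕂.carrier) := Submodule.dense_iff_topologicalClosure_eq_top.mpr hd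
  have hlift : ∀ x y : 𝒰, ∃ T' : 𝕂.carrier →L[ℂ] 𝕂.carrier, ∀ v,
      T' ∘L ψ v = ψ v ∘L π (adjoint (x : K₁ →L[ℂ] L₁) ∘L (y : K₁ →L[ℂ] L₁)) := by
    intro x y
    refine exists_lift (fun v => ψ v) hd _ fun v w => ?_
    rw [hψk]
    exact hranges _ (hmU x y) _ (hmV v w)
  choose k hk using hlift
  have hk' : ∀ x y v h, k x y (ψ v h) =
      ψ v (π (adjoint (x : K₁ →L[ℂ] L₁) ∘L (y : K₁ →L[ℂ] L₁)) h) := fun x y v h =>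
    congrArg (fun Z : H →L[ℂ] 𝕂.carrier => Z h) (hk x y v)
  have hext : ∀ A B : 𝕂.carrier →L[ℂ] 𝕂.carrier, (∀ v h, A (ψ v h) = B (ψ v h)) → A = B := by
    intro A B hAB
    refine ContinuousLinearMap.ext_on hdense ?_
    rintro _ ⟨v, h, rfl⟩
    exact hAB v h
  have hψk' : ∀ v w h, adjoint (ψ v) (ψ w h) =
      ρ (adjoint (v : H₂ →L[ℂ] K₂) ∘L (w : H₂ →L[ℂ] K₂)) h := fun v w h =>
    congrArg (fun Z : H →L[ℂ] H => Z h) (hψk v w)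
  have hkstar : ∀ x y, star (k x y) = k y x := by
    intro x y
    refine hext _ _ fun v h => ?_
    refine hdense.eq_of_inner_right (𝕜 := ℂ) fun z hz => ?_
    induction hz using Submodule.span_induction with
    | zero => simp
    | add a b _ _ ha hb => rw [inner_add_left, inner_add_left, ha, hb]
    | smul c a _ ha => rw [inner_smul_left, inner_smul_left, ha]
    | mem z hz =>
      obtain ⟨w, g, rfl⟩ := hz
      rw [star_eq_adjoint, adjoint_inner_right, hk', hk', ← adjoint_inner_right,
        ← adjoint_inner_right, hψk', ← star_eq_adjoint, hkU.str, ← adjoint_inner_right (ψ w), hψk']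
      have := congrArg (fun Z : H →L[ℂ] H => Z h) (hranges _ (hmU y x) _ (hmV w v)).eq
      exact congrArg (inner ℂ g) this
  have hkK : TernKer 𝒰 k := by
    refine ⟨?_, ?_, hkstar, ?_⟩
    · intro v x y
      refine hext _ _ fun w h => ?_
      rw [hk', hkU.add, add_apply, add_apply, map_add, hk', hk']
    · intro c v x
      refine hext _ _ fun w h => ?_
      rw [hk', hkU.smul, smul_apply, smul_apply, map_smul, hk']
    · intro v w x y h
      refine hext _ _ fun a b => ?_
      rw [hk', hkU.mul v w x y h]
      change _ = k v w (k x y (ψ a b))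
      rw [hk', hk']
      rfl
  obtain ⟨𝕃, φ, hφ, hφk, -⟩ := hkK.dilate h𝒰closed h𝒰tro
  refine ⟨𝕂, 𝕃, φ, ψ, hφ, hψ, ?_, ?_⟩
  · intro u₁ u₂ v₁ v₂
    rw [hφk]
    have e1 : adjoint (ψ v₂) ∘L k u₁ u₂ =
        π (adjoint (u₁ : K₁ →L[ℂ] L₁) ∘L (u₂ : K₁ →L[ℂ] L₁)) ∘L adjoint (ψ v₂) := by
      have := congrArg adjoint (hk u₂ u₁ v₂)
      rw [adjoint_comp, adjoint_comp, ← star_eq_adjoint (k u₂ u₁), hkstar,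
        ← star_eq_adjoint (π _), hkU.str] at this
      exact this
    change k u₁ u₂ ∘L (ψ v₁ ∘L adjoint (ψ v₂)) = (ψ v₁ ∘L adjoint (ψ v₂)) ∘L k u₁ u₂
    rw [comp_assoc, e1, ← comp_assoc, hk, comp_assoc]
  · intro u₁ u₂ v₁ v₂
    have e : adjoint (ψ v₁) ∘L adjoint (φ u₁) ∘L φ u₂ ∘L ψ v₂ =
        adjoint (ψ v₁) ∘L (adjoint (φ u₁) ∘L φ u₂) ∘L ψ v₂ := rfl
    rw [e, hφk, hk, ← comp_assoc, hψk]
    exact (hranges _ (hmU u₁ u₂) _ (hmV v₁ v₂)).eq
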